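/- Exact value in dimension one: for d = 1, every k ≥ 1, and every λ > 0, one has a_{k,λ} = (∑_{m=0}^{k−1} λ^m/m!) / (∑_{l=0}^{k} λ^l/l!), i.e., a_{k,λ} = 1 − Erl(λ,k), where Erl(λ,k) = (λ^k/k!) / (∑_{l=0}^{k} λ^l/l!) is the Erlang loss probability. -/

import Mathlib

open MeasureTheory ProbabilityTheory Filter

noncomputable instance instDecEqEuclidean (d : ℕ) :
    DecidableEq (EuclideanSpace ℝ (Fin d)) := Classical.decEq _

/-- `maxColorable d k r V` is the maximum number of vertices of the geometric
graph `G_r(V)` (edges between distinct points of `V` at Euclidean distance at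
most `r`) that can be properly colored with `k` colors, i.e. the maximum
cardinality of a subset `S ⊆ V` admitting a proper `k`-coloring. -/
noncomputable def maxColorable (d k : ℕ) (r : ℝ)
    (V : Finset (EuclideanSpace ℝ (Fin d))) : ℕ :=
  sSup {m : ℕ | ∃ S : Finset (EuclideanSpace ℝ (Fin d)), S ⊆ V ∧ S.card = m ∧
    ∃ c : EuclideanSpace ℝ (Fin d) → Fin k,
      ∀ u ∈ S, ∀ v ∈ S, u ≠ v → dist u v ≤ r → c u ≠ c v}

/-- The unit cube `[0,1]^d`. -/
def unitCube (d : ℕ) : Set (EuclideanSpace ℝ (Fin d)) :=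
  {x | ∀ i, x i ∈ Set.Icc (0 : ℝ) 1}

/-- The uniform distribution on the unit cube `[0,1]^d` (Lebesgue measure
restricted to the cube, which has total mass one). -/
noncomputable def uniformCube (d : ℕ) : Measure (EuclideanSpace ℝ (Fin d)) :=
  volume.restrict (unitCube d)

/-- `EH d k r n = E[H_{k,r}(n)] = E[N_{k,r}({X_1,…,X_n})]` for `X_1,…,X_n`
i.i.d. uniform on the unit cube `[0,1]^d`. -/
noncomputable def EH (d k : ℕ) (r : ℝ) (n : ℕ) : ℝ :=
  ∫ x : Fin n → EuclideanSpace ℝ (Fin d),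
    (maxColorable d k r (Finset.image x Finset.univ) : ℝ)
    ∂(Measure.pi fun _ => uniformCube d)

/-- `EF d k lam t = E[F_{k,lam}(t)] = ∑_n P(Po(lam t^d) = n) E[H_{k,1/t}(n)]`,
the expected maximum number of `k`-colorable vertices of the unit-distance
geometric graph on a Poisson process of intensity `lam` in `[0,t]^d`. -/
noncomputable def EF (d k : ℕ) (lam t : ℝ) : ℝ :=
  ∑' n : ℕ, poissonPMFReal (Real.toNNReal (lam * t ^ d)) n * EH d k (1 / t) n

/-- The normalized expectation `\bar F_{k,lam}(t) = E[F_{k,lam}(t)]/(lam t^d)`. -/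
noncomputable def Fbar (d k : ℕ) (lam t : ℝ) : ℝ :=
  EF d k lam t / (lam * t ^ d)

/-- The constant `a_{k,lam} = inf_{t>0} \bar F_{k,lam}(t)`. -/
noncomputable def aConst (d k : ℕ) (lam : ℝ) : ℝ :=
  sInf {x : ℝ | ∃ t : ℝ, 0 < t ∧ x = Fbar d k lam t}

/-- The volume `V_d(r) = π^{d/2} r^d / Γ(d/2 + 1)` of the `d`-dimensional
Euclidean ball of radius `r`. -/
noncomputable def ballVol (d : ℕ) (r : ℝ) : ℝ :=
  Real.pi ^ ((d : ℝ) / 2) * r ^ d / Real.Gamma ((d : ℝ) / 2 + 1)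

/-!
Going through the points from left to right and greedily keeping every point that sees fewer than
`k` kept points within distance `1` behind it is optimal up to an additive error `k`. The kept
points are the customers admitted by a loss system with `k` servers and deterministic service time
`1`, and by insensitivity its stationary acceptance probability is `1 - Erl(λ, k)`.

To compute it, cut the interval into `M` equal cells. The cells hit by a Poisson number of uniform
points are independent Bernoulli variables, and the resulting loss system in discrete time has a
stationary law depending only on the number of busy servers. The bounds hold for every initial
state, hence also on average over the stationary law, under which each arrival is accepted with
probability exactly `acceptProb`. As `M → ∞` this tends to `1 - Erl(λ, k)`, so `E[F(t)]` lies
between `λ t (1 - Erl(λ, k))` and `λ t (1 - Erl(λ, k)) + k`; the infimum is approached as `t → ∞`.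
-/

section LossSystem

/-- The effect of an arrival on a loss system with `k` servers. A state is the set of pending
departure times; the customer, who would leave at time `i`, is lost if all servers are busy. -/
def seizeServer (k i : ℕ) (v : Finset ℕ) : Finset ℕ := if v.card < k then insert i v else v

/-- The pending departure times just before time `n` in the loss system with `k` servers,
deterministic service time `d`, arrival times `B` and initial state `w`. Departures at time `n`
take place after the arrival at time `n`. -/
def pending (k d : ℕ) (B w : Finset ℕ) : ℕ → Finset ℕ
  | 0 => w
  | n + 1 => (if n ∈ B then seizeServer k (n + d) (pending k d B w n)
      else pending k d B w n).erase n

/-- The arrivals that find a free server. -/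
def admitted (k d : ℕ) (B w : Finset ℕ) : Finset ℕ :=
  B.filter fun n => (pending k d B w n).card < k

/-- Every window of `d + 1` consecutive integers contains at most `k` elements of `T`: this is
`k`-colorability of the graph on `T` joining integers at distance at most `d`. -/
def WindowBounded (k d : ℕ) (T : Finset ℕ) : Prop :=
  ∀ s, (T ∩ Finset.Icc s (s + d)).card ≤ k

variable {k d n : ℕ} {B w T : Finset ℕ}

lemma mem_pending_iff {i : ℕ} :
    i ∈ pending k d B w n ↔ n ≤ i ∧ (i ∈ w ∨ ∃ j ∈ admitted k d B w, j < n ∧ j + d = i) := by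
  induction n with
  | zero => simp [pending]
  | succ n ih =>
    have step : i ∈ pending k d B w (n + 1) ↔
        i ≠ n ∧ (i ∈ pending k d B w n ∨ n ∈ admitted k d B w ∧ n + d = i) := by
      simp only [pending, seizeServer, admitted, Finset.mem_erase, Finset.mem_filter]
      split_ifs <;> grind
    rw [step, ih]
    grind

lemma admitted_subset : admitted k d B w ⊆ B := Finset.filter_subset _ _

lemma pending_congr {B' : Finset ℕ} (h : ∀ i < n, i ∈ B ↔ i ∈ B') :
    pending k d B w n = pending k d B' w n := by
  induction n with
  | zero => rfl
  | succ n ih =>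
    simp only [pending, ih fun i hi => h i (hi.trans n.lt_succ_self), h n n.lt_succ_self]

lemma pending_insert_of_le {m : ℕ} (hm : m ≤ n) :
    pending k d (insert n B) w m = pending k d B w m :=
  pending_congr fun i hi => by simp [(hi.trans_le hm).ne]

lemma admitted_insert_of_subset_range (hB : B ⊆ Finset.range n) :
    admitted k d (insert n B) w = if (pending k d B w n).card < k
      then insert n (admitted k d B w) else admitted k d B w := by
  have hcongr : ∀ m ∈ B, pending k d (insert n B) w m = pending k d B w m := fun m hm =>
    pending_insert_of_le (Finset.mem_range.1 (hB hm)).le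
  rw [admitted, Finset.filter_insert, pending_insert_of_le le_rfl,
    Finset.filter_congr fun m hm => by rw [hcongr m hm], admitted]

lemma windowBounded_admitted : WindowBounded k d (admitted k d B w) := by
  intro s
  set W := admitted k d B w ∩ Finset.Icc s (s + d)
  obtain hW | hW := W.eq_empty_or_nonempty
  · simp [hW]
  have hlast := W.max'_mem hW
  set m := W.max' hW
  obtain ⟨hm, hmI⟩ := Finset.mem_inter.1 hlast
  have hfree : (pending k d B w m).card < k := (Finset.mem_filter.1 hm).2
  -- all other customers admitted during the window are still in service when `m` arrives
  have hbusy : (W.erase m).image (· + d) ⊆ pending k d B w m := by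
    intro i hi
    obtain ⟨j, hj, rfl⟩ := Finset.mem_image.1 hi
    have hjm : j < m := W.lt_max'_of_mem_erase_max' hW hj
    obtain ⟨hjA, hjI⟩ := Finset.mem_inter.1 (Finset.mem_of_mem_erase hj)
    rw [Finset.mem_Icc] at hjI hmI
    exact mem_pending_iff.2 ⟨by omega, .inr ⟨j, hjA, hjm, rfl⟩⟩
  have hcard := Finset.card_le_card hbusy
  rw [Finset.card_image_of_injective _ (add_left_injective d)] at hcard
  have := Finset.card_erase_add_one hlast
  omega

lemma le_card_admitted_inter_Ico (hw : w ⊆ Finset.range d) (hdn : d ≤ n)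
    (hfull : k ≤ (pending k d B w n).card) :
    k ≤ (admitted k d B w ∩ Finset.Ico (n - d) n).card := by
  have hsub : pending k d B w n ⊆ (admitted k d B w ∩ Finset.Ico (n - d) n).image (· + d) := by
    intro i hi
    obtain ⟨hni, hiw | ⟨j, hj, hjn, rfl⟩⟩ := mem_pending_iff.1 hi
    · have := Finset.mem_range.1 (hw hiw)
      omega
    · exact Finset.mem_image_of_mem _ (Finset.mem_inter.2 ⟨hj, Finset.mem_Ico.2 (by omega)⟩)
  exact hfull.trans ((Finset.card_le_card hsub).trans Finset.card_image_le)

/-- A customer is refused only when `k` customers were admitted during the last `d` time units, and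
the competitor `T` accepts at most `k` during the window of length `d` that ends now. -/
lemma WindowBounded.card_inter_range_le (hT : WindowBounded k d T) (hTB : T ⊆ B)
    (hw : w ⊆ Finset.range d) (n : ℕ) :
    (T ∩ Finset.range n).card ≤ (admitted k d B w ∩ Finset.range n).card + k := by
  induction n using Nat.strong_induction_on with
  | _ n ih =>
  obtain _ | n := n
  · simp
  have hmono : (admitted k d B w ∩ Finset.range n).card ≤
      (admitted k d B w ∩ Finset.range (n + 1)).card := by gcongr; simp
  by_cases hnT : n ∈ T
  swap
  · rw [Finset.range_add_one, Finset.inter_insert_of_notMem hnT, ← Finset.range_add_one]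
    exact (ih n n.lt_succ_self).trans (by gcongr)
  by_cases hfree : (pending k d B w n).card < k
  · have hnA : n ∈ admitted k d B w := Finset.mem_filter.2 ⟨hTB hnT, hfree⟩
    have := ih n n.lt_succ_self
    rw [Finset.range_add_one, Finset.inter_insert_of_mem hnT, Finset.inter_insert_of_mem hnA,
      Finset.card_insert_of_notMem (by simp), Finset.card_insert_of_notMem (by simp)]
    omega
  obtain hnd | hdn := lt_or_ge n d
  · refine (Finset.card_le_card ?_).trans ((hT 0).trans (Nat.le_add_left _ _))
    exact Finset.inter_subset_inter_left fun j hj => by grind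
  have hsplit : (T ∩ Finset.range (n + 1)).card ≤
      (T ∩ Finset.range (n - d)).card + (T ∩ Finset.Icc (n - d) (n - d + d)).card :=
    (Finset.card_le_card fun j hj => by grind).trans (Finset.card_union_le _ _)
  have hadmitted : (admitted k d B w ∩ Finset.range (n - d)).card +
      (admitted k d B w ∩ Finset.Ico (n - d) n).card ≤
      (admitted k d B w ∩ Finset.range n).card := by
    rw [← Finset.card_union_of_disjoint (by grind [Finset.disjoint_left])]
    exact Finset.card_le_card fun j hj => by grind
  have := le_card_admitted_inter_Ico hw hdn (not_lt.1 hfree)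
  have := ih (n - d) (by omega)
  have := hT (n - d)
  omega

lemma WindowBounded.card_le (hT : WindowBounded k d T) (hTB : T ⊆ B)
    (hw : w ⊆ Finset.range d) : T.card ≤ (admitted k d B w).card + k := by
  obtain ⟨n, hn⟩ := T.exists_nat_subset_range
  calc T.card = (T ∩ Finset.range n).card := by rw [Finset.inter_eq_left.2 hn]
    _ ≤ (admitted k d B w ∩ Finset.range n).card + k := hT.card_inter_range_le hTB hw n
    _ ≤ _ := by gcongr; exact Finset.inter_subset_left

/-- The coloring is the rank modulo `k`. -/
lemma WindowBounded.exists_coloring (hk : 0 < k) (hT : WindowBounded k d T) :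
    ∃ c : ℕ → Fin k, ∀ u ∈ T, ∀ v ∈ T, u ≠ v → u ≤ v + d → v ≤ u + d → c u ≠ c v := by
  let rank (u : ℕ) : ℕ := (T.filter (· < u)).card
  have hrank : ∀ u ∈ T, ∀ v ∈ T, u < v → v ≤ u + d → rank u % k ≠ rank v % k := by
    intro u hu v hv huv hvu hmod
    have hlt : rank u < rank v := Finset.card_lt_card <|
      Finset.ssubset_iff_of_subset (fun j hj => by grind) |>.2 ⟨u, by grind, by grind⟩
    have hwindow : rank v + 1 ≤ rank u + k := by
      have hsub : insert v (T.filter (· < v)) ⊆ T.filter (· < u) ∪ T ∩ Finset.Icc u (u + d) :=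
        fun j hj => by grind
      rw [← Finset.card_insert_of_notMem (s := T.filter (· < v)) (a := v) (by simp)]
      exact (Finset.card_le_card hsub).trans ((Finset.card_union_le _ _).trans (by grind [hT u]))
    have hdvd : k ∣ rank v - rank u := (Nat.modEq_iff_dvd' hlt.le).1 hmod
    have := Nat.le_of_dvd (by omega) hdvd
    omega
  refine ⟨fun u => ⟨rank u % k, Nat.mod_lt _ hk⟩, fun u hu v hv huv h₁ h₂ heq => ?_⟩
  have heq' : rank u % k = rank v % k := congrArg Fin.val heq
  obtain h | h := huv.lt_or_gt
  · exact hrank u hu v hv h h₂ heq'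
  · exact hrank v hv u hu h h₁ heq'.symm

end LossSystem

section GeometricGraph

/-- Proper `k`-colorability of the geometric graph `G_r(S)`, as in the definition of
`maxColorable`. -/
def GeomColorable (k : ℕ) {E : Type*} [PseudoMetricSpace E] (r : ℝ) (S : Finset E) : Prop :=
  ∃ c : E → Fin k, ∀ u ∈ S, ∀ v ∈ S, u ≠ v → dist u v ≤ r → c u ≠ c v

variable {d k e : ℕ} {r : ℝ} {V W S : Finset (EuclideanSpace ℝ (Fin d))}

lemma GeomColorable.card_le_maxColorable (hS : GeomColorable k r S) (hSV : S ⊆ V) :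
    S.card ≤ maxColorable d k r V :=
  le_csSup ⟨V.card, by rintro _ ⟨S, hS, rfl, -⟩; exact Finset.card_le_card hS⟩ ⟨S, hSV, rfl, hS⟩

lemma maxColorable_le {b : ℕ} (h : ∀ S ⊆ V, GeomColorable k r S → S.card ≤ b) :
    maxColorable d k r V ≤ b :=
  csSup_le' (by rintro _ ⟨S, hSV, rfl, hS⟩; exact h S hSV hS)

lemma maxColorable_le_card : maxColorable d k r V ≤ V.card :=
  maxColorable_le fun _ hSV _ => Finset.card_le_card hSV

lemma maxColorable_le_of_injOn {φ : EuclideanSpace ℝ (Fin d) → EuclideanSpace ℝ (Fin d)}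
    (hφ : Set.InjOn φ V) (hVW : ∀ u ∈ V, φ u ∈ W)
    (hdist : ∀ u ∈ V, ∀ v ∈ V, dist (φ u) (φ v) ≤ r → dist u v ≤ r) :
    maxColorable d k r V ≤ maxColorable d k r W := by
  refine maxColorable_le fun S hSV ⟨c, hc⟩ => ?_
  have hinv : ∀ u ∈ S, Function.invFunOn φ V (φ u) = u := fun u hu =>
    hφ.leftInvOn_invFunOn (hSV hu)
  have hcol : GeomColorable k r (S.image φ) := by
    refine ⟨c ∘ Function.invFunOn φ V, ?_⟩
    simp only [Finset.forall_mem_image, Function.comp_apply]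
    intro u hu v hv huv hr
    rw [hinv u hu, hinv v hv]
    exact hc u hu v hv (fun h => huv (h ▸ rfl)) (hdist u (hSV hu) v (hSV hv) hr)
  rw [← Finset.card_image_of_injOn (hφ.mono hSV)]
  exact hcol.card_le_maxColorable (Finset.image_subset_iff.2 fun u hu => hVW u (hSV hu))

lemma maxColorable_image_univ_le {ι : Type*} [Fintype ι] {x y : ι → EuclideanSpace ℝ (Fin d)}
    (heq : ∀ i j, x i = x j ↔ y i = y j)
    (hdist : ∀ i j, dist (x i) (x j) ≤ r ↔ dist (y i) (y j) ≤ r) :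
    maxColorable d k r (Finset.univ.image x) ≤ maxColorable d k r (Finset.univ.image y) := by
  have hext : ∀ i, Function.extend x y id (x i) = y i :=
    (Function.FactorsThrough.extend_apply fun i j h => (heq i j).1 h) id
  refine maxColorable_le_of_injOn (φ := Function.extend x y id) ?_ ?_ ?_
  · intro u hu v hv
    simp only [Finset.coe_image, Finset.coe_univ, Set.image_univ, Set.mem_range] at hu hv
    obtain ⟨i, rfl⟩ := hu
    obtain ⟨j, rfl⟩ := hv
    rw [hext, hext]
    exact (heq i j).2
  · simp [hext]
  · simp [hext, hdist]

/-- The number of colorable vertices depends only on which of the points coincide and which are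
close, a measurable function of the points with finitely many values. -/
lemma measurable_maxColorable_image_univ {ι : Type*} [Fintype ι] :
    Measurable fun x : ι → EuclideanSpace ℝ (Fin d) =>
      maxColorable d k r (Finset.univ.image x) := by
  let pattern (x : ι → EuclideanSpace ℝ (Fin d)) (i j : ι) : Prop × Prop :=
    (x i = x j, dist (x i) (x j) ≤ r)
  have hpattern : Measurable pattern := by
    refine measurable_pi_lambda _ fun i => measurable_pi_lambda _ fun j => Measurable.prodMk ?_ ?_
    · exact measurableSet_setOfPred.1
        (measurableSet_eq_fun (measurable_pi_apply i) (measurable_pi_apply j))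
    · exact measurableSet_setOfPred.1 (measurableSet_le
        ((measurable_pi_apply i).dist (measurable_pi_apply j)) measurable_const)
  have hfactors : Function.FactorsThrough
      (fun x : ι → EuclideanSpace ℝ (Fin d) => maxColorable d k r (Finset.univ.image x))
      pattern := by
    intro x y hxy
    have heq : ∀ i j, x i = x j ↔ y i = y j := fun i j =>
      iff_of_eq (congrArg Prod.fst (congrFun₂ hxy i j))
    have hdist : ∀ i j, dist (x i) (x j) ≤ r ↔ dist (y i) (y j) ≤ r := fun i j =>
      iff_of_eq (congrArg Prod.snd (congrFun₂ hxy i j))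
    exact (maxColorable_image_univ_le heq hdist).antisymm
      (maxColorable_image_univ_le (fun i j => (heq i j).symm) fun i j => (hdist i j).symm)
  rw [← show Function.extend pattern _ (fun _ => 0) ∘ pattern = _ from
    funext (hfactors.extend_apply _)]
  exact Measurable.of_discrete.comp hpattern

variable {q : EuclideanSpace ℝ (Fin d) → ℕ}

lemma WindowBounded.card_le_maxColorable {A : Finset ℕ} (hA : WindowBounded k e A) (hk : 0 < k)
    (hAV : A ⊆ V.image q) (hq : ∀ u ∈ V, ∀ v ∈ V, dist u v ≤ r → q v ≤ q u + e) :
    A.card ≤ maxColorable d k r V := by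
  obtain ⟨S, hSV, hinj, rfl⟩ :=
    Finset.exists_subset_injOn_image_eq_of_surjOn (s := V) (t := A) (f := q)
      fun a ha => Finset.mem_image.1 (hAV ha)
  obtain ⟨c, hc⟩ := hA.exists_coloring hk
  rw [Finset.card_image_of_injOn hinj]
  refine GeomColorable.card_le_maxColorable ⟨c ∘ q, fun u hu v hv huv hr => ?_⟩ hSV
  exact hc _ (Finset.mem_image_of_mem q hu) _ (Finset.mem_image_of_mem q hv) (hinj.ne hu hv huv)
    (hq v (hSV hv) u (hSV hu) (by rwa [dist_comm])) (hq u (hSV hu) v (hSV hv) hr)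

lemma GeomColorable.windowBounded_image (hS : GeomColorable k r S)
    (hq : ∀ u ∈ S, ∀ v ∈ S, q u ≤ q v + e → q v ≤ q u + e → dist u v ≤ r) :
    WindowBounded k e (S.image q) := by
  obtain ⟨c, hc⟩ := hS
  intro s
  obtain ⟨U, hUS, hinj, hU⟩ := Finset.exists_subset_injOn_image_eq_of_surjOn (s := S)
    (t := S.image q ∩ Finset.Icc s (s + e)) (f := q)
    fun a ha => Finset.mem_image.1 (Finset.mem_inter.1 ha).1
  have hUwin : ∀ u ∈ U, s ≤ q u ∧ q u ≤ s + e := fun u hu => by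
    have := hU ▸ Finset.mem_image_of_mem q hu
    exact Finset.mem_Icc.1 (Finset.mem_inter.1 this).2
  have hcinj : Set.InjOn c U := by
    intro u hu v hv huv
    by_contra hne
    have := hUwin u hu
    have := hUwin v hv
    exact hc u (hUS hu) v (hUS hv) hne
      (hq u (hUS hu) v (hUS hv) (by omega) (by omega)) huv
  calc _ = U.card := by rw [← hU, Finset.card_image_of_injOn hinj]
    _ ≤ (Finset.univ : Finset (Fin k)).card :=
      Finset.card_le_card_of_injOn c (fun _ _ => Finset.mem_univ _) hcinj
    _ = k := by simp

lemma card_add_card_image_le {α β : Type*} [DecidableEq β] {s t : Finset α} (hst : s ⊆ t)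
    (f : α → β) :
    s.card + (t.image f).card ≤ t.card + (s.image f).card := by
  classical
  have himage : (t.image f).card ≤ (s.image f).card + (t \ s).card := by
    rw [← Finset.union_sdiff_of_subset hst, Finset.image_union, Finset.union_sdiff_of_subset hst]
    exact (Finset.card_union_le _ _).trans (by gcongr; exact Finset.card_image_le)
  have := Finset.card_sdiff_add_card_eq_card hst
  omega

/-- At most one point of each cell is counted in the loss system; the points in excess are
accounted for by `V.card - (V.image q).card`. -/
lemma maxColorable_add_card_image_le {w : Finset ℕ}
    (hq : ∀ u ∈ V, ∀ v ∈ V, q u ≤ q v + e → q v ≤ q u + e → dist u v ≤ r)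
    (hw : w ⊆ Finset.range e) :
    maxColorable d k r V + (V.image q).card ≤
      V.card + (admitted k e (V.image q) w).card + k := by
  have : maxColorable d k r V ≤
      V.card + (admitted k e (V.image q) w).card + k - (V.image q).card := by
    refine maxColorable_le fun S hSV hS => ?_
    have hwin := hS.windowBounded_image fun u hu v hv => hq u (hSV hu) v (hSV hv)
    have := hwin.card_le (Finset.image_subset_image hSV) hw
    have := card_add_card_image_le hSV q
    omega
  have := Finset.card_image_le (s := V) (f := q)
  omega

end GeometricGraph

section BernoulliMean

variable {α : Type*} {p : ℝ} {s : Finset α} {f g : Finset α → ℝ}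

/-- The expectation of `f B` for a random subset `B` of `s` that contains each element of `s`
independently with probability `p`. -/
noncomputable def bernoulliMean (p : ℝ) (s : Finset α) (f : Finset α → ℝ) : ℝ :=
  ∑ B ∈ s.powerset, p ^ B.card * (1 - p) ^ (s.card - B.card) * f B

lemma bernoulliMean_congr (h : ∀ B ⊆ s, f B = g B) : bernoulliMean p s f = bernoulliMean p s g :=
  Finset.sum_congr rfl fun B hB => by rw [h B (Finset.mem_powerset.1 hB)]

lemma bernoulliMean_add :
    bernoulliMean p s (fun B => f B + g B) = bernoulliMean p s f + bernoulliMean p s g := by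
  simp only [bernoulliMean, mul_add, Finset.sum_add_distrib]

lemma bernoulliMean_sub :
    bernoulliMean p s (fun B => f B - g B) = bernoulliMean p s f - bernoulliMean p s g := by
  simp only [bernoulliMean, mul_sub, Finset.sum_sub_distrib]

lemma bernoulliMean_const_mul (c : ℝ) :
    bernoulliMean p s (fun B => c * f B) = c * bernoulliMean p s f := by
  simp only [bernoulliMean, mul_left_comm _ c, Finset.mul_sum]

lemma bernoulliMean_const (c : ℝ) : bernoulliMean p s (fun _ => c) = c := by
  rw [bernoulliMean, ← Finset.sum_mul, Finset.sum_pow_mul_eq_add_pow]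
  simp

lemma bernoulliMean_insert [DecidableEq α] {a : α} (ha : a ∉ s) :
    bernoulliMean p (insert a s) f =
      bernoulliMean p s fun B => (1 - p) * f B + p * f (insert a B) := by
  rw [bernoulliMean, Finset.sum_powerset_insert ha, ← Finset.sum_add_distrib]
  refine Finset.sum_congr rfl fun B hB => ?_
  have hBs := Finset.mem_powerset.1 hB
  have hcard := Finset.card_le_card hBs
  rw [Finset.card_insert_of_notMem ha, Finset.card_insert_of_notMem fun h => ha (hBs h),
    Nat.add_sub_add_right, Nat.sub_add_comm hcard]
  ring

lemma bernoulliMean_card : bernoulliMean p s (fun B => (B.card : ℝ)) = s.card * p := by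
  classical
  induction s using Finset.induction_on with
  | empty => simp [bernoulliMean]
  | insert a s ha ih =>
    have hstep : ∀ B ⊆ s, (1 - p) * (B.card : ℝ) + p * (insert a B).card = B.card + p := by
      intro B hB
      rw [Finset.card_insert_of_notMem fun h => ha (hB h)]
      push_cast
      ring
    rw [bernoulliMean_insert ha, bernoulliMean_congr hstep, bernoulliMean_add, ih,
      bernoulliMean_const, Finset.card_insert_of_notMem ha]
    push_cast
    ring

end BernoulliMean

section StationaryLaw

lemma sum_powerset_card_eq_sum_range {α : Type*} (s : Finset α) {N : ℕ} {g : ℕ → ℝ}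
    (hg : ∀ m, N ≤ m → g m = 0) :
    ∑ v ∈ s.powerset, g v.card = ∑ m ∈ Finset.range N, (s.card.choose m : ℝ) * g m := by
  rw [Finset.sum_powerset_apply_card]
  simp only [nsmul_eq_mul]
  have hchoose : ∀ m, s.card + 1 ≤ m → (s.card.choose m : ℝ) * g m = 0 := fun m hm => by
    rw [Nat.choose_eq_zero_of_lt hm, Nat.cast_zero, zero_mul]
  have hvanish : ∀ m, N ≤ m → (s.card.choose m : ℝ) * g m = 0 := fun m hm => by
    rw [hg m hm, mul_zero]
  rw [← Finset.eventually_constant_sum hchoose (le_max_left _ N),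
    Finset.eventually_constant_sum hvanish (le_max_right _ _)]

/-- The stationary distribution, up to normalization, of the loss system with `k` servers and
Bernoulli arrivals of parameter `p`: the weight of each state with `m` busy servers. -/
noncomputable def stationaryWeight (k : ℕ) (p : ℝ) (m : ℕ) : ℝ :=
  if m < k then (p / (1 - p)) ^ m else if m = k then (1 - p) * (p / (1 - p)) ^ k else 0

/-- The stationary probability that a customer is admitted to the loss system with `k` servers,
service time `d` and Bernoulli arrivals of parameter `p`. -/
noncomputable def acceptProb (k d : ℕ) (p : ℝ) : ℝ :=
  (∑ m ∈ Finset.range k, (d.choose m : ℝ) * stationaryWeight k p m) /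
    ∑ m ∈ Finset.range (k + 1), (d.choose m : ℝ) * stationaryWeight k p m

variable {k d : ℕ} {p : ℝ}

lemma stationaryWeight_of_lt {m : ℕ} (h : m < k) :
    stationaryWeight k p m = (p / (1 - p)) ^ m :=
  if_pos h

lemma stationaryWeight_self : stationaryWeight k p k = (1 - p) * (p / (1 - p)) ^ k := by
  simp [stationaryWeight]

lemma stationaryWeight_of_gt {m : ℕ} (h : k < m) : stationaryWeight k p m = 0 := by
  simp [stationaryWeight, h.not_gt, h.ne']

lemma stationaryWeight_nonneg (hp : 0 ≤ p) (hp1 : p ≤ 1) (m : ℕ) : 0 ≤ stationaryWeight k p m := by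
  have : 0 ≤ 1 - p := sub_nonneg.2 hp1
  unfold stationaryWeight
  split_ifs <;> positivity

/-- The flow of the stationary weight into the states whose other pending departures are `u`; the
states before the step may contain `n`, those after it `n + d`. -/
lemma stationaryWeight_balance (hp1 : p ≠ 1) (m : ℕ) (x y : ℝ) :
    stationaryWeight k p m * ((1 - p) * x + p * if m < k then y else x) +
      stationaryWeight k p (m + 1) * ((1 - p) * x + p * if m + 1 < k then y else x) =
    stationaryWeight k p m * x + stationaryWeight k p (m + 1) * y := by
  have hθ : (1 - p) * (p / (1 - p)) = p := mul_div_cancel₀ _ (sub_ne_zero.2 hp1.symm)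
  obtain h | rfl | h := lt_trichotomy (m + 1) k
  · have hm : m < k := by omega
    simp only [stationaryWeight_of_lt, h, hm, if_true]
    linear_combination (p / (1 - p)) ^ m * (x - y) * hθ
  · simp only [stationaryWeight_of_lt, stationaryWeight_self, lt_add_one, lt_irrefl, if_true,
      if_false]
    linear_combination (p / (1 - p)) ^ m * (x - y) * hθ
  · rw [if_neg (by omega), if_neg (by omega), stationaryWeight_of_gt h]
    ring

lemma sum_stationaryWeight_step (hd : 0 < d) (hp1 : p ≠ 1) (n : ℕ) (f : Finset ℕ → ℝ) :
    ∑ v ∈ (Finset.Ico n (n + d)).powerset, stationaryWeight k p v.card *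
        ((1 - p) * f (v.erase n) + p * f ((seizeServer k (n + d) v).erase n)) =
      ∑ v ∈ (Finset.Ico (n + 1) (n + 1 + d)).powerset, stationaryWeight k p v.card * f v := by
  have hbefore : Finset.Ico n (n + d) = insert n (Finset.Ico (n + 1) (n + d)) := by grind
  have hafter : Finset.Ico (n + 1) (n + 1 + d) = insert (n + d) (Finset.Ico (n + 1) (n + d)) := by
    grind
  rw [hbefore, hafter, Finset.sum_powerset_insert (by simp), Finset.sum_powerset_insert (by simp),
    ← Finset.sum_add_distrib, ← Finset.sum_add_distrib]
  refine Finset.sum_congr rfl fun u hu => ?_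
  have hu := Finset.mem_powerset.1 hu
  have hn : n ∉ u := fun h => by simpa using hu h
  have hnd : n + d ∉ u := fun h => by simpa using hu h
  have hseize : f ((seizeServer k (n + d) u).erase n) =
      if u.card < k then f (insert (n + d) u) else f u := by
    rw [seizeServer]
    split_ifs
    · rw [Finset.erase_eq_of_notMem (by grind)]
    · rw [Finset.erase_eq_of_notMem hn]
  have hseize' : f ((seizeServer k (n + d) (insert n u)).erase n) =
      if u.card + 1 < k then f (insert (n + d) u) else f u := by
    rw [seizeServer, Finset.card_insert_of_notMem hn]
    split_ifs
    · rw [Finset.insert_comm, Finset.erase_insert (by grind)]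
    · rw [Finset.erase_insert hn]
  rw [hseize, hseize', Finset.erase_insert hn, Finset.erase_eq_of_notMem hn,
    Finset.card_insert_of_notMem hn, Finset.card_insert_of_notMem hnd,
    stationaryWeight_balance hp1]

lemma sum_stationaryWeight_pending (hd : 0 < d) (hp1 : p ≠ 1) (n : ℕ) (f : Finset ℕ → ℝ) :
    ∑ w ∈ (Finset.range d).powerset, stationaryWeight k p w.card *
        bernoulliMean p (Finset.range n) (fun B => f (pending k d B w n)) =
      ∑ v ∈ (Finset.Ico n (n + d)).powerset, stationaryWeight k p v.card * f v := by
  induction n generalizing f with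
  | zero => simp only [pending, bernoulliMean_const, zero_add, Nat.Ico_zero_eq_range]
  | succ n ih =>
    rw [← sum_stationaryWeight_step hd hp1, ← ih]
    refine Finset.sum_congr rfl fun w _ => ?_
    rw [Finset.range_add_one, bernoulliMean_insert Finset.notMem_range_self]
    congr 1
    refine bernoulliMean_congr fun B hB => ?_
    rw [pending, pending, if_neg fun h => Finset.notMem_range_self (hB h),
      if_pos (Finset.mem_insert_self n B), pending_insert_of_le le_rfl]

lemma sum_stationaryWeight_card_admitted (hd : 0 < d) (hp1 : p ≠ 1) (n : ℕ) :
    ∑ w ∈ (Finset.range d).powerset, stationaryWeight k p w.card *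
        bernoulliMean p (Finset.range n) (fun B => ((admitted k d B w).card : ℝ)) =
      n * p * ∑ m ∈ Finset.range k, (d.choose m : ℝ) * stationaryWeight k p m := by
  induction n with
  | zero => simp [bernoulliMean, admitted]
  | succ n ih =>
    let free (v : Finset ℕ) : ℝ := if v.card < k then 1 else 0
    have hstep (w : Finset ℕ) :
        bernoulliMean p (Finset.range (n + 1)) (fun B => ((admitted k d B w).card : ℝ)) =
        bernoulliMean p (Finset.range n) (fun B => ((admitted k d B w).card : ℝ)) +
          p * bernoulliMean p (Finset.range n) (fun B => free (pending k d B w n)) := by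
      rw [Finset.range_add_one, bernoulliMean_insert Finset.notMem_range_self,
        ← bernoulliMean_const_mul, ← bernoulliMean_add]
      refine bernoulliMean_congr fun B hB => ?_
      have hn : n ∉ admitted k d B w := fun h => Finset.notMem_range_self (hB (admitted_subset h))
      simp only [admitted_insert_of_subset_range hB, free]
      split_ifs
      · rw [Finset.card_insert_of_notMem hn]
        push_cast
        ring
      · ring
    have hfree : ∑ v ∈ (Finset.Ico n (n + d)).powerset, stationaryWeight k p v.card * free v =
        ∑ m ∈ Finset.range k, (d.choose m : ℝ) * stationaryWeight k p m := by
      rw [sum_powerset_card_eq_sum_range (N := k) _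
        (g := fun m => stationaryWeight k p m * if m < k then 1 else 0) (by grind),
        Nat.card_Ico, Nat.add_sub_cancel_left]
      exact Finset.sum_congr rfl fun m hm => by rw [if_pos (Finset.mem_range.1 hm), mul_one]
    simp only [hstep, mul_add, mul_left_comm _ p, Finset.sum_add_distrib, ← Finset.mul_sum]
    rw [ih, sum_stationaryWeight_pending hd hp1, hfree]
    push_cast
    ring

lemma sum_stationaryWeight :
    ∑ w ∈ (Finset.range d).powerset, stationaryWeight k p w.card =
      ∑ m ∈ Finset.range (k + 1), (d.choose m : ℝ) * stationaryWeight k p m := by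
  rw [sum_powerset_card_eq_sum_range _ fun m hm => stationaryWeight_of_gt hm, Finset.card_range]

lemma sum_choose_mul_stationaryWeight_pos (hp : 0 ≤ p) (hp1 : p < 1) :
    0 < ∑ m ∈ Finset.range (k + 1), (d.choose m : ℝ) * stationaryWeight k p m := by
  have hzero : 0 < stationaryWeight k p 0 := by
    have : 0 < 1 - p := sub_pos.2 hp1
    obtain rfl | hk := k.eq_zero_or_pos
    · rw [stationaryWeight_self]
      positivity
    · rw [stationaryWeight_of_lt hk]
      positivity
  refine Finset.sum_pos' (fun m _ => ?_) ⟨0, by simp, by simpa using hzero⟩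
  exact mul_nonneg (Nat.cast_nonneg _) (stationaryWeight_nonneg hp hp1.le m)

lemma mul_acceptProb_le (hd : 0 < d) (hp : 0 ≤ p) (hp1 : p < 1) {n : ℕ} {c : ℝ}
    (h : ∀ w ⊆ Finset.range d,
      bernoulliMean p (Finset.range n) (fun B => ((admitted k d B w).card : ℝ)) ≤ c) :
    n * p * acceptProb k d p ≤ c := by
  rw [acceptProb, ← mul_div_assoc,
    div_le_iff₀ (sum_choose_mul_stationaryWeight_pos hp hp1),
    ← sum_stationaryWeight_card_admitted hd hp1.ne, ← sum_stationaryWeight, mul_comm c,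
    Finset.sum_mul]
  exact Finset.sum_le_sum fun w hw => mul_le_mul_of_nonneg_left (h w (Finset.mem_powerset.1 hw))
    (stationaryWeight_nonneg hp hp1.le _)

lemma le_mul_acceptProb (hd : 0 < d) (hp : 0 ≤ p) (hp1 : p < 1) {n : ℕ} {c : ℝ}
    (h : ∀ w ⊆ Finset.range d,
      c ≤ bernoulliMean p (Finset.range n) (fun B => ((admitted k d B w).card : ℝ))) :
    c ≤ n * p * acceptProb k d p := by
  rw [acceptProb, ← mul_div_assoc,
    le_div_iff₀ (sum_choose_mul_stationaryWeight_pos hp hp1),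
    ← sum_stationaryWeight_card_admitted hd hp1.ne, ← sum_stationaryWeight, mul_comm c,
    Finset.sum_mul]
  exact Finset.sum_le_sum fun w hw => mul_le_mul_of_nonneg_left (h w (Finset.mem_powerset.1 hw))
    (stationaryWeight_nonneg hp hp1.le _)

end StationaryLaw

section Poissonization

open scoped NNReal

lemma integral_pow_poissonMeasure (μ : ℝ≥0) (c : ℝ) :
    ∫ n, c ^ n ∂poissonMeasure μ = Real.exp (-(μ * (1 - c))) := by
  have hexp : Real.exp (μ * c) = ∑' n : ℕ, (μ * c) ^ n / (n.factorial : ℝ) := by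
    rw [Real.exp_eq_exp_ℝ, NormedSpace.exp_eq_tsum_div]
  rw [integral_poissonMeasure, show -(μ * (1 - c)) = -μ + μ * c by ring, Real.exp_add, hexp,
    ← tsum_mul_left]
  refine tsum_congr fun n => ?_
  rw [smul_eq_mul, mul_pow]
  ring

lemma hasSum_natCast_poissonMeasure (μ : ℝ≥0) :
    HasSum (fun n : ℕ => Real.exp (-μ) * μ ^ n / n.factorial * n) μ := by
  rw [← hasSum_nat_add_iff' 1]
  have hshift (n : ℕ) : Real.exp (-μ) * μ ^ (n + 1) / (n + 1).factorial * (n + 1 : ℕ) =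
      μ * (Real.exp (-μ) * μ ^ n / n.factorial) := by
    rw [Nat.factorial_succ]
    push_cast
    field_simp
    ring
  simpa only [hshift, Finset.sum_range_one, Nat.cast_zero, mul_zero, sub_zero, mul_one]
    using (hasSum_one_poissonMeasure μ).mul_left (μ : ℝ)

lemma integrable_natCast_poissonMeasure (μ : ℝ≥0) :
    Integrable (fun n : ℕ => (n : ℝ)) (poissonMeasure μ) := by
  simpa only [integrable_poissonMeasure_iff, Real.norm_natCast] using
    (hasSum_natCast_poissonMeasure μ).summable

lemma integral_natCast_poissonMeasure (μ : ℝ≥0) : ∫ n : ℕ, (n : ℝ) ∂poissonMeasure μ = μ := by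
  simpa only [integral_poissonMeasure, smul_eq_mul] using (hasSum_natCast_poissonMeasure μ).tsum_eq

lemma eq_of_sum_powerset_eq {α G : Type*} [AddCancelCommMonoid G] {s : Finset α}
    {F F' : Finset α → G} (h : ∀ A ⊆ s, ∑ B ∈ A.powerset, F B = ∑ B ∈ A.powerset, F' B)
    {A : Finset α} (hA : A ⊆ s) : F A = F' A := by
  classical
  induction A using Finset.strongInduction with
  | H A ih =>
  have hproper : ∑ B ∈ A.powerset.erase A, F B = ∑ B ∈ A.powerset.erase A, F' B :=
    Finset.sum_congr rfl fun B hB => by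
      have hBA := (Finset.mem_ssubsets (s := A)).1 hB
      exact ih B hBA (hBA.subset.trans hA)
  have := h A hA
  rwa [← Finset.sum_erase_add _ _ (Finset.mem_powerset_self A),
    ← Finset.sum_erase_add _ _ (Finset.mem_powerset_self A), hproper, add_right_inj] at this

lemma measureReal_eq_card_div_card {α : Type*} [MeasurableSpace α] [MeasurableSingletonClass α]
    {κ : Measure α} [SigmaFinite κ] {s A : Finset α} (hκ : ∀ j ∈ s, κ.real {j} = 1 / s.card)
    (hA : A ⊆ s) : κ.real A = A.card / s.card := by
  rw [← sum_measureReal_singleton, Finset.sum_congr rfl fun j hj => hκ j (hA hj),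
    Finset.sum_const, nsmul_eq_mul, mul_one_div]

/-- The probability that at least one point of a Poisson number, of mean `μ`, of independent
points falls into a given one of `M` equally likely cells. -/
noncomputable def occupationProb (μ : ℝ) (M : ℕ) : ℝ := 1 - Real.exp (-(μ / M))

lemma occupationProb_nonneg {μ : ℝ} (hμ : 0 ≤ μ) (M : ℕ) : 0 ≤ occupationProb μ M :=
  sub_nonneg.2 (Real.exp_le_one_iff.2 (neg_nonpos.2 (by positivity)))

lemma occupationProb_lt_one (μ : ℝ) (M : ℕ) : occupationProb μ M < 1 :=
  sub_lt_self 1 (Real.exp_pos _)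

variable {α : Type*} [DecidableEq α] [MeasurableSpace α] {κ : Measure α} [IsProbabilityMeasure κ]
  {s A : Finset α} {n : ℕ}

/-- The probability that `n` independent points of law `κ` occupy exactly the set `A`. -/
noncomputable def occupancyProb (κ : Measure α) (n : ℕ) (A : Finset α) : ℝ :=
  (Measure.pi fun _ : Fin n => κ).real {y | Finset.univ.image y = A}

lemma integrable_occupancyProb (A : Finset α) (μ : ℝ≥0) :
    Integrable (fun n => occupancyProb κ n A) (poissonMeasure μ) :=
  .of_bound (C := 1) Measurable.of_discrete.aestronglyMeasurable <| .of_forall fun n => by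
    rw [occupancyProb, Real.norm_of_nonneg measureReal_nonneg]
    exact measureReal_le_one

lemma measureReal_pi_image_subset :
    (Measure.pi fun _ : Fin n => κ).real {y | Finset.univ.image y ⊆ A} = κ.real A ^ n := by
  have hpi : {y : Fin n → α | Finset.univ.image y ⊆ A} = Set.univ.pi fun _ => (A : Set α) := by
    ext y
    simp [Finset.image_subset_iff]
  rw [hpi, measureReal_def, Measure.pi_pi, ENNReal.toReal_prod]
  simp [measureReal_def]

variable [Countable α] [MeasurableSingletonClass α]

lemma sum_powerset_occupancyProb :
    ∑ B ∈ A.powerset, occupancyProb κ n B = κ.real A ^ n := by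
  rw [← measureReal_pi_image_subset]
  unfold occupancyProb
  rw [← measureReal_biUnion_finset]
  · congr 1
    ext y
    simp
  · intro B _ B' _ hBB'
    exact Set.disjoint_left.2 fun y hy hy' => hBB' (hy.symm.trans hy')
  · exact fun B _ => .of_discrete

lemma ae_pi_image_subset (hs : κ.real s = 1) :
    ∀ᵐ y : Fin n → α ∂Measure.pi fun _ => κ, Finset.univ.image y ⊆ s := by
  refine (ae_iff_prob_eq_one .of_discrete).2 ?_
  rw [← ENNReal.toReal_eq_one_iff, ← measureReal_def, measureReal_pi_image_subset, hs, one_pow]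

lemma integral_pi_image_eq_sum (hs : κ.real s = 1) (h : Finset α → ℝ) :
    ∫ y : Fin n → α, h (Finset.univ.image y) ∂Measure.pi (fun _ => κ) =
      ∑ A ∈ s.powerset, occupancyProb κ n A * h A := by
  have hae : ∀ᵐ y : Fin n → α ∂Measure.pi fun _ => κ, h (Finset.univ.image y) =
      ∑ A ∈ s.powerset, {y | Finset.univ.image y = A}.indicator (fun _ => h A) y := by
    filter_upwards [ae_pi_image_subset hs] with y hy
    rw [Finset.sum_eq_single_of_mem _ (Finset.mem_powerset.2 hy) fun A _ hA => by
      simp [Ne.symm hA]]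
    simp
  have hmeas (A : Finset α) : MeasurableSet {y : Fin n → α | Finset.univ.image y = A} :=
    .of_discrete
  rw [integral_congr_ae hae, integral_finsetSum _ fun A _ =>
    (integrable_const (h A)).indicator (hmeas A)]
  refine Finset.sum_congr rfl fun A _ => ?_
  rw [integral_indicator_const _ (hmeas A), occupancyProb, smul_eq_mul]

lemma integrable_pi_image (hs : κ.real s = 1) (h : Finset α → ℝ) :
    Integrable (fun y : Fin n → α => h (Finset.univ.image y)) (Measure.pi fun _ => κ) := by
  refine .of_bound (C := ∑ A ∈ s.powerset, ‖h A‖) Measurable.of_discrete.aestronglyMeasurable ?_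
  filter_upwards [ae_pi_image_subset hs] with y hy
  exact Finset.single_le_sum (f := fun A => ‖h A‖) (fun A _ => norm_nonneg _)
    (Finset.mem_powerset.2 hy)

lemma integrable_integral_pi_image (hs : κ.real s = 1) (h : Finset α → ℝ) (μ : ℝ≥0) :
    Integrable (fun n => ∫ y : Fin n → α, h (Finset.univ.image y) ∂Measure.pi fun _ => κ)
      (poissonMeasure μ) := by
  simp only [integral_pi_image_eq_sum hs]
  exact integrable_finsetSum _ fun A _ => (integrable_occupancyProb A μ).mul_const (h A)

lemma integral_occupancyProb (hs : s.Nonempty) (hκ : ∀ j ∈ s, κ.real {j} = 1 / s.card) (μ : ℝ≥0)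
    (hA : A ⊆ s) :
    ∫ n, occupancyProb κ n A ∂poissonMeasure μ =
      occupationProb μ s.card ^ A.card * (1 - occupationProb μ s.card) ^ (s.card - A.card) := by
  set p := occupationProb μ s.card with hp
  refine eq_of_sum_powerset_eq (s := s) (F := fun B => ∫ n, occupancyProb κ n B ∂poissonMeasure μ)
    (F' := fun B => p ^ B.card * (1 - p) ^ (s.card - B.card)) (fun A hA => ?_) hA
  have hcard : A.card ≤ s.card := Finset.card_le_card hA
  calc ∑ B ∈ A.powerset, ∫ n, occupancyProb κ n B ∂poissonMeasure μ
      = ∫ n, κ.real A ^ n ∂poissonMeasure μ := by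
        rw [← integral_finsetSum _ fun B _ => integrable_occupancyProb B μ]
        simp only [sum_powerset_occupancyProb]
    _ = (1 - p) ^ (s.card - A.card) := by
        have : (s.card : ℝ) ≠ 0 := by simpa using hs.ne_empty
        rw [integral_pow_poissonMeasure, measureReal_eq_card_div_card hκ hA, hp, occupationProb,
          sub_sub_cancel, ← Real.exp_nat_mul, Nat.cast_sub hcard]
        congr 1
        field_simp
    _ = ∑ B ∈ A.powerset,
          p ^ B.card * (1 - p) ^ (A.card - B.card) * (1 - p) ^ (s.card - A.card) := by
        rw [← Finset.sum_mul, Finset.sum_pow_mul_eq_add_pow, add_sub_cancel, one_pow, one_mul]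
    _ = ∑ B ∈ A.powerset, p ^ B.card * (1 - p) ^ (s.card - B.card) := by
        refine Finset.sum_congr rfl fun B hB => ?_
        have := Finset.card_le_card (Finset.mem_powerset.1 hB)
        rw [mul_assoc, ← pow_add]
        congr 2
        omega

lemma integral_poissonMeasure_integral_pi_image (hs : s.Nonempty)
    (hκ : ∀ j ∈ s, κ.real {j} = 1 / s.card) (μ : ℝ≥0) (h : Finset α → ℝ) :
    ∫ n, ∫ y : Fin n → α, h (Finset.univ.image y) ∂Measure.pi (fun _ => κ) ∂poissonMeasure μ =
      bernoulliMean (occupationProb μ s.card) s h := by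
  have hκs : κ.real s = 1 := by
    rw [measureReal_eq_card_div_card hκ subset_rfl, div_self (by simpa using hs.ne_empty)]
  simp only [integral_pi_image_eq_sum hκs]
  rw [integral_finsetSum _ fun A _ => (integrable_occupancyProb A μ).mul_const (h A),
    bernoulliMean]
  refine Finset.sum_congr rfl fun A hA => ?_
  rw [integral_mul_const, integral_occupancyProb hs hκ μ (Finset.mem_powerset.1 hA)]

end Poissonization

section UniformCube

open scoped NNReal

variable {d k n : ℕ} {r : ℝ}

lemma unitCube_eq_preimage_Icc (d : ℕ) :
    unitCube d = WithLp.ofLp ⁻¹' Set.Icc (0 : Fin d → ℝ) 1 := by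
  ext x
  simp [unitCube, Pi.le_def, forall_and]

lemma measurableSet_unitCube (d : ℕ) : MeasurableSet (unitCube d) := by
  rw [unitCube_eq_preimage_Icc]
  exact measurableSet_Icc.preimage (PiLp.volume_preserving_ofLp (Fin d)).measurable

instance isProbabilityMeasure_uniformCube (d : ℕ) : IsProbabilityMeasure (uniformCube d) := by
  constructor
  rw [uniformCube, Measure.restrict_apply_univ, unitCube_eq_preimage_Icc,
    (PiLp.volume_preserving_ofLp (Fin d)).measure_preimage measurableSet_Icc.nullMeasurableSet,
    Real.volume_Icc_pi]
  simp

lemma ae_mem_unitCube :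
    ∀ᵐ x : Fin n → EuclideanSpace ℝ (Fin d) ∂Measure.pi fun _ => uniformCube d,
      ∀ i, x i ∈ unitCube d :=
  ae_all_iff.2 fun i => (measurePreserving_eval _ i).quasiMeasurePreserving.ae
    (ae_restrict_mem (measurableSet_unitCube d))

lemma maxColorable_image_univ_le_card (x : Fin n → EuclideanSpace ℝ (Fin d)) :
    maxColorable d k r (Finset.univ.image x) ≤ n :=
  maxColorable_le_card.trans (Finset.card_image_le.trans (by simp))

lemma integrable_maxColorable_image_univ :
    Integrable (fun x : Fin n → EuclideanSpace ℝ (Fin d) =>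
      (maxColorable d k r (Finset.univ.image x) : ℝ)) (Measure.pi fun _ => uniformCube d) :=
  .of_bound (C := n) (measurable_from_top.comp
    measurable_maxColorable_image_univ).aestronglyMeasurable <| .of_forall fun x => by
      rw [Real.norm_natCast]
      exact_mod_cast maxColorable_image_univ_le_card x

lemma integrable_EH (μ : ℝ≥0) : Integrable (EH d k r) (poissonMeasure μ) := by
  refine (integrable_natCast_poissonMeasure μ).mono' Measurable.of_discrete.aestronglyMeasurable <|
    .of_forall fun n => ?_
  rw [EH, Real.norm_of_nonneg (integral_nonneg fun x => Nat.cast_nonneg _)]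
  calc ∫ x : Fin n → EuclideanSpace ℝ (Fin d), (maxColorable d k r (Finset.univ.image x) : ℝ)
        ∂Measure.pi (fun _ => uniformCube d)
      ≤ ∫ _ : Fin n → EuclideanSpace ℝ (Fin d), (n : ℝ) ∂Measure.pi (fun _ => uniformCube d) :=
        integral_mono integrable_maxColorable_image_univ (integrable_const _) fun x =>
          Nat.cast_le.2 (maxColorable_image_univ_le_card x)
    _ = n := by simp

lemma EF_eq_integral_poissonMeasure (d k : ℕ) (lam t : ℝ) :
    EF d k lam t = ∫ n, EH d k (1 / t) n ∂poissonMeasure (Real.toNNReal (lam * t ^ d)) :=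
  (integral_poissonMeasure _ _).symm

end UniformCube

section Cells

open scoped NNReal

/-- The index of the cell containing `x` when `[0,1)` is cut into `M` cells of equal length. -/
noncomputable def cellIndex (M : ℕ) (x : EuclideanSpace ℝ (Fin 1)) : ℕ := ⌊M * x 0⌋₊

/-- The law of the cell occupied by a uniform point of the unit interval. -/
noncomputable def cellLaw (M : ℕ) : Measure ℕ := (uniformCube 1).map (cellIndex M)

variable {d k n M : ℕ} {r : ℝ} {u v : EuclideanSpace ℝ (Fin 1)}

lemma dist_eq_abs_sub_apply_zero (u v : EuclideanSpace ℝ (Fin 1)) : dist u v = |u 0 - v 0| := by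
  rw [EuclideanSpace.dist_eq, Fin.sum_univ_one, Real.sqrt_sq dist_nonneg, Real.dist_eq]

lemma cellIndex_le_add (hu : u ∈ unitCube 1) (hd : r * M ≤ d) (huv : dist u v ≤ r) :
    cellIndex M v ≤ cellIndex M u + d := by
  rw [dist_eq_abs_sub_apply_zero] at huv
  have hu0 : 0 ≤ (M : ℝ) * u 0 := mul_nonneg M.cast_nonneg (hu 0).1
  rw [cellIndex, cellIndex, ← Nat.floor_add_natCast hu0]
  refine Nat.floor_le_floor ?_
  have : (M : ℝ) * (v 0 - u 0) ≤ M * r := by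
    gcongr
    linarith [neg_abs_le (u 0 - v 0)]
  linarith

lemma dist_le_of_cellIndex_le_add (hu : u ∈ unitCube 1) (hv : v ∈ unitCube 1) (hM : 0 < M)
    (hd : (d : ℝ) + 1 ≤ r * M) (huv : cellIndex M u ≤ cellIndex M v + d)
    (hvu : cellIndex M v ≤ cellIndex M u + d) : dist u v ≤ r := by
  have hM' : (0 : ℝ) < M := Nat.cast_pos.2 hM
  have hle (x y : EuclideanSpace ℝ (Fin 1)) (hy : y ∈ unitCube 1)
      (hxy : cellIndex M x ≤ cellIndex M y + d) : x 0 - y 0 ≤ r := by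
    have hx1 : M * x 0 < cellIndex M x + 1 := Nat.lt_floor_add_one _
    have hy1 : (cellIndex M y : ℝ) ≤ M * y 0 := Nat.floor_le (mul_nonneg hM'.le (hy 0).1)
    have hxy' : (cellIndex M x : ℝ) ≤ cellIndex M y + d := by exact_mod_cast hxy
    nlinarith
  rw [dist_eq_abs_sub_apply_zero, abs_sub_le_iff]
  exact ⟨hle u v hv huv, hle v u hu hvu⟩

lemma measurable_cellIndex : Measurable (cellIndex M) :=
  Nat.measurable_floor.comp (by fun_prop)

instance isProbabilityMeasure_cellLaw : IsProbabilityMeasure (cellLaw M) :=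
  Measure.isProbabilityMeasure_map measurable_cellIndex.aemeasurable

lemma cellLaw_real_singleton {j : ℕ} (hj : j < M) : (cellLaw M).real {j} = 1 / M := by
  have hM : (0 : ℝ) < M := Nat.cast_pos.2 (by omega)
  have hj' : (j : ℝ) + 1 ≤ M := by exact_mod_cast hj
  have hcell : cellIndex M ⁻¹' {j} ∩ unitCube 1 =
      (fun x : EuclideanSpace ℝ (Fin 1) => x 0) ⁻¹' Set.Ico (j / M) ((j + 1) / M) := by
    ext x
    simp only [cellIndex, unitCube, Set.mem_inter_iff, Set.mem_preimage, Set.mem_singleton_iff,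
      Set.mem_Ico, div_le_iff₀' hM, lt_div_iff₀' hM]
    constructor
    · rintro ⟨hfloor, hx⟩
      exact (Nat.floor_eq_iff (mul_nonneg hM.le (hx 0).1)).1 hfloor
    · rintro ⟨hjx, hxj⟩
      have hx0 : 0 ≤ (M : ℝ) * x 0 := j.cast_nonneg.trans hjx
      refine ⟨(Nat.floor_eq_iff hx0).2 ⟨hjx, hxj⟩, fun i => ?_⟩
      rw [Subsingleton.elim i 0]
      constructor <;> nlinarith
  have hvol : MeasurePreserving fun x : EuclideanSpace ℝ (Fin 1) => x 0 :=
    (volume_preserving_funUnique (Fin 1) ℝ).comp (PiLp.volume_preserving_ofLp (Fin 1))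
  rw [cellLaw, map_measureReal_apply measurable_cellIndex (measurableSet_singleton j), uniformCube,
    measureReal_restrict_apply (measurable_cellIndex (measurableSet_singleton j)), hcell,
    measureReal_def, hvol.measure_preimage measurableSet_Ico.nullMeasurableSet, Real.volume_Ico,
    ENNReal.toReal_ofReal (by rw [← sub_div]; simp)]
  ring

lemma measurePreserving_cellIndex_pi :
    MeasurePreserving (fun (x : Fin n → EuclideanSpace ℝ (Fin 1)) i => cellIndex M (x i))
      (Measure.pi fun _ => uniformCube 1) (Measure.pi fun _ => cellLaw M) :=
  measurePreserving_pi _ _ fun _ => measurable_cellIndex.measurePreserving _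

/-- The set of cells occupied by the points `x`. -/
noncomputable def occupiedCells (M : ℕ) (x : Fin n → EuclideanSpace ℝ (Fin 1)) : Finset ℕ :=
  Finset.univ.image fun i => cellIndex M (x i)

lemma image_cellIndex_image_univ (x : Fin n → EuclideanSpace ℝ (Fin 1)) :
    (Finset.univ.image x).image (cellIndex M) = occupiedCells M x :=
  Finset.image_image

lemma integral_comp_occupiedCells (h : Finset ℕ → ℝ) :
    ∫ x : Fin n → EuclideanSpace ℝ (Fin 1), h (occupiedCells M x)
        ∂Measure.pi (fun _ => uniformCube 1) =
      ∫ y : Fin n → ℕ, h (Finset.univ.image y) ∂Measure.pi (fun _ => cellLaw M) := by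
  rw [← measurePreserving_cellIndex_pi.map_eq, integral_map
    measurePreserving_cellIndex_pi.aemeasurable Measurable.of_discrete.aestronglyMeasurable]
  rfl

lemma cellLaw_real_range (hM : 0 < M) : (cellLaw M).real (Finset.range M) = 1 := by
  rw [← sum_measureReal_singleton,
    Finset.sum_congr rfl fun j hj => cellLaw_real_singleton (Finset.mem_range.1 hj)]
  simp [hM.ne']

lemma integrable_comp_occupiedCells (hM : 0 < M) (h : Finset ℕ → ℝ) :
    Integrable (fun x : Fin n → EuclideanSpace ℝ (Fin 1) => h (occupiedCells M x))
      (Measure.pi fun _ => uniformCube 1) :=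
  measurePreserving_cellIndex_pi.integrable_comp_of_integrable
    (integrable_pi_image (cellLaw_real_range hM) h)

lemma integrable_integral_comp_occupiedCells (hM : 0 < M) (μ : ℝ≥0) (h : Finset ℕ → ℝ) :
    Integrable (fun n => ∫ x : Fin n → EuclideanSpace ℝ (Fin 1), h (occupiedCells M x)
      ∂Measure.pi fun _ => uniformCube 1) (poissonMeasure μ) := by
  simp only [integral_comp_occupiedCells]
  exact integrable_integral_pi_image (cellLaw_real_range hM) h μ

lemma integral_integral_comp_occupiedCells (hM : 0 < M) (μ : ℝ≥0) (h : Finset ℕ → ℝ) :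
    ∫ n, ∫ x : Fin n → EuclideanSpace ℝ (Fin 1), h (occupiedCells M x)
        ∂Measure.pi (fun _ => uniformCube 1) ∂poissonMeasure μ =
      bernoulliMean (occupationProb μ M) (Finset.range M) h := by
  have huniform : ∀ j ∈ Finset.range M, (cellLaw M).real {j} = 1 / (Finset.range M).card :=
    fun j hj => by rw [Finset.card_range, cellLaw_real_singleton (Finset.mem_range.1 hj)]
  simp only [integral_comp_occupiedCells]
  rw [integral_poissonMeasure_integral_pi_image (by simpa using hM.ne') huniform μ h,
    Finset.card_range]

lemma card_admitted_occupiedCells_le {w : Finset ℕ} {x : Fin n → EuclideanSpace ℝ (Fin 1)}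
    (hk : 0 < k) (hd : r * M ≤ d) (hx : ∀ i, x i ∈ unitCube 1) :
    (admitted k d (occupiedCells M x) w).card ≤ maxColorable 1 k r (Finset.univ.image x) := by
  refine windowBounded_admitted.card_le_maxColorable hk
    (admitted_subset.trans (image_cellIndex_image_univ x).ge) ?_
  simp only [Finset.forall_mem_image, Finset.mem_univ, true_imp_iff]
  exact fun i j => cellIndex_le_add (hx i) hd

lemma maxColorable_image_univ_le_add {w : Finset ℕ} {x : Fin n → EuclideanSpace ℝ (Fin 1)}
    (hM : 0 < M) (hd : (d : ℝ) + 1 ≤ r * M) (hw : w ⊆ Finset.range d)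
    (hx : ∀ i, x i ∈ unitCube 1) :
    (maxColorable 1 k r (Finset.univ.image x) : ℝ) ≤
      n + k + ((admitted k d (occupiedCells M x) w).card - (occupiedCells M x).card) := by
  have hdist : ∀ u ∈ Finset.univ.image x, ∀ v ∈ Finset.univ.image x,
      cellIndex M u ≤ cellIndex M v + d → cellIndex M v ≤ cellIndex M u + d → dist u v ≤ r := by
    simp only [Finset.forall_mem_image, Finset.mem_univ, true_imp_iff]
    exact fun i j => dist_le_of_cellIndex_le_add (hx i) (hx j) hM hd
  have hbound := maxColorable_add_card_image_le (k := k) hdist hw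
  rw [image_cellIndex_image_univ] at hbound
  have hcard : (Finset.univ.image x).card ≤ n := Finset.card_image_le.trans (by simp)
  have : maxColorable 1 k r (Finset.univ.image x) + (occupiedCells M x).card ≤
      n + (admitted k d (occupiedCells M x) w).card + k := by omega
  have : (maxColorable 1 k r (Finset.univ.image x) + (occupiedCells M x).card : ℝ) ≤
      n + (admitted k d (occupiedCells M x) w).card + k := by exact_mod_cast this
  linarith

lemma integral_card_admitted_le_EH {w : Finset ℕ} (hk : 0 < k) (hM : 0 < M) (hd : r * M ≤ d) :
    ∫ x : Fin n → EuclideanSpace ℝ (Fin 1), ((admitted k d (occupiedCells M x) w).card : ℝ)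
        ∂Measure.pi (fun _ => uniformCube 1) ≤ EH 1 k r n := by
  refine integral_mono_ae (integrable_comp_occupiedCells hM
    fun B => ((admitted k d B w).card : ℝ)) integrable_maxColorable_image_univ ?_
  filter_upwards [ae_mem_unitCube] with x hx
  exact Nat.cast_le.2 (card_admitted_occupiedCells_le hk hd hx)

lemma EH_le_add_integral {w : Finset ℕ} (hM : 0 < M) (hd : (d : ℝ) + 1 ≤ r * M)
    (hw : w ⊆ Finset.range d) :
    EH 1 k r n ≤ n + k + ∫ x : Fin n → EuclideanSpace ℝ (Fin 1),
      ((admitted k d (occupiedCells M x) w).card - (occupiedCells M x).card : ℝ)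
        ∂Measure.pi (fun _ => uniformCube 1) := by
  have hcells := integrable_comp_occupiedCells (n := n) hM
    fun B => ((admitted k d B w).card - B.card : ℝ)
  have hmono : EH 1 k r n ≤ _ := integral_mono_ae integrable_maxColorable_image_univ
    ((integrable_const (n + k : ℝ)).add hcells) <| by
      filter_upwards [ae_mem_unitCube] with x hx
      exact maxColorable_image_univ_le_add hM hd hw hx
  refine hmono.trans_eq ?_
  rw [integral_add' (integrable_const _) hcells, integral_const, probReal_univ, one_smul]

lemma mul_acceptProb_le_integral_EH (hk : 0 < k) (hd : 0 < d) (hM : 0 < M) (hrM : r * M ≤ d)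
    (μ : ℝ≥0) :
    M * occupationProb μ M * acceptProb k d (occupationProb μ M) ≤
      ∫ n, EH 1 k r n ∂poissonMeasure μ := by
  refine mul_acceptProb_le hd (occupationProb_nonneg μ.coe_nonneg M) (occupationProb_lt_one μ M)
    fun w _ => ?_
  rw [← integral_integral_comp_occupiedCells hM]
  exact integral_mono (integrable_integral_comp_occupiedCells hM μ
    fun B => ((admitted k d B w).card : ℝ)) (integrable_EH μ)
    fun n => integral_card_admitted_le_EH hk hM hrM

lemma integral_EH_le (hd : 0 < d) (hM : 0 < M) (hrM : (d : ℝ) + 1 ≤ r * M) (μ : ℝ≥0) :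
    ∫ n, EH 1 k r n ∂poissonMeasure μ ≤ μ + k - M * occupationProb μ M +
      M * occupationProb μ M * acceptProb k d (occupationProb μ M) := by
  rw [← sub_le_iff_le_add']
  refine le_mul_acceptProb hd (occupationProb_nonneg μ.coe_nonneg M) (occupationProb_lt_one μ M)
    fun w hw => ?_
  have hn := integrable_natCast_poissonMeasure μ
  have hk := integrable_const (μ := poissonMeasure μ) (k : ℝ)
  have hcells := integrable_integral_comp_occupiedCells hM μ
    fun B => ((admitted k d B w).card - B.card : ℝ)
  have hmean := integral_mono (integrable_EH μ) ((hn.add hk).add hcells)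
    fun n => EH_le_add_integral hM hrM hw
  rw [integral_add' (hn.add hk) hcells, integral_add' hn hk, integral_natCast_poissonMeasure,
    integral_const, probReal_univ, one_smul, integral_integral_comp_occupiedCells hM μ
      fun B => ((admitted k d B w).card - B.card : ℝ), bernoulliMean_sub, bernoulliMean_card,
    Finset.card_range] at hmean
  linarith

end Cells

section ErlangLimit

open scoped Topology

/-- `1 - Erl(lam, k)`, where `Erl` is the Erlang loss probability. -/
noncomputable def erlangAccept (k : ℕ) (lam : ℝ) : ℝ :=
  (∑ m ∈ Finset.range k, lam ^ m / (m.factorial : ℝ)) /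
    ∑ l ∈ Finset.range (k + 1), lam ^ l / (l.factorial : ℝ)

variable {k : ℕ} {lam t : ℝ}

lemma sum_pow_div_factorial_pos (hlam : 0 ≤ lam) :
    0 < ∑ l ∈ Finset.range (k + 1), lam ^ l / (l.factorial : ℝ) :=
  Finset.sum_pos' (fun _ _ => by positivity) ⟨0, by simp⟩

lemma tendsto_mul_occupationProb (μ : ℝ) :
    Tendsto (fun M : ℕ => M * occupationProb μ M) atTop (𝓝 μ) := by
  have hderiv : HasDerivAt (fun x : ℝ => 1 - Real.exp (-(μ * x))) μ 0 := by
    simpa using (((hasDerivAt_id (0 : ℝ)).const_mul μ).neg.exp.const_sub 1)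
  refine (hderiv.tendsto_slope_zero_right.comp
    (tendsto_inv_atTop_nhdsGT_zero.comp tendsto_natCast_atTop_atTop)).congr fun M => ?_
  simp [occupationProb, div_eq_mul_inv]

lemma tendsto_acceptProb {p : ℕ → ℝ} (hlam : 0 ≤ lam)
    (hp : Tendsto (fun n => n * p n) atTop (𝓝 lam)) :
    Tendsto (fun n => acceptProb k n (p n)) atTop (𝓝 (erlangAccept k lam)) := by
  have hp0 : Tendsto p atTop (𝓝 0) := tendsto_zero_of_tendsto_mul_atTop hp
  have hp1 : Tendsto (fun n => 1 - p n) atTop (𝓝 1) := by simpa using hp0.const_sub 1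
  have hodds : Tendsto (fun n => n * (p n / (1 - p n))) atTop (𝓝 lam) := by
    simpa only [Pi.div_def, mul_div_assoc, div_one] using Tendsto.div hp hp1 one_ne_zero
  have hpow (m : ℕ) : Tendsto (fun n => n.choose m * (p n / (1 - p n)) ^ m) atTop
      (𝓝 (lam ^ m / m.factorial)) := tendsto_choose_mul_pow_atTop m hodds
  have hfree : Tendsto (fun n => ∑ m ∈ Finset.range k,
      (n.choose m : ℝ) * stationaryWeight k (p n) m) atTop
      (𝓝 (∑ m ∈ Finset.range k, lam ^ m / m.factorial)) :=
    tendsto_finsetSum _ fun m hm => by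
      simpa only [stationaryWeight_of_lt (Finset.mem_range.1 hm)] using hpow m
  have hfull : Tendsto (fun n => (n.choose k : ℝ) * stationaryWeight k (p n) k) atTop
      (𝓝 (lam ^ k / k.factorial)) := by
    simpa only [stationaryWeight_self, mul_left_comm, one_mul] using hp1.mul (hpow k)
  refine hfree.div ?_ (sum_pow_div_factorial_pos hlam).ne'
  simpa only [Finset.sum_range_succ] using hfree.add hfull

variable {M : ℕ → ℕ}

lemma tendsto_atTop_of_tendsto_natCast_div (ht : 0 < t)
    (hM : Tendsto (fun n => (M n : ℝ) / n) atTop (𝓝 t)) : Tendsto M atTop atTop := by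
  rw [← tendsto_natCast_atTop_iff (R := ℝ)]
  refine (hM.pos_mul_atTop ht tendsto_natCast_atTop_atTop).congr' ?_
  filter_upwards [eventually_ne_atTop 0] with n hn
  field_simp

lemma tendsto_mul_acceptProb (hlam : 0 ≤ lam) (ht : 0 < t)
    (hM : Tendsto (fun n => (M n : ℝ) / n) atTop (𝓝 t)) :
    Tendsto (fun n => M n * occupationProb (lam * t) (M n) *
      acceptProb k n (occupationProb (lam * t) (M n))) atTop
      (𝓝 (lam * t * erlangAccept k lam)) := by
  have hMatTop := tendsto_atTop_of_tendsto_natCast_div ht hM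
  have hmean : Tendsto (fun n => M n * occupationProb (lam * t) (M n)) atTop (𝓝 (lam * t)) :=
    (tendsto_mul_occupationProb _).comp hMatTop
  refine hmean.mul (tendsto_acceptProb hlam ?_)
  rw [← mul_div_cancel_right₀ lam ht.ne']
  refine (Tendsto.div hmean hM ht.ne').congr' ?_
  filter_upwards [hMatTop.eventually_ne_atTop 0] with n hMn
  rw [Pi.div_apply]
  field_simp

lemma EF_one_eq_integral (k : ℕ) (h : 0 ≤ lam * t) :
    EF 1 k lam t = ∫ n, EH 1 k (1 / t) n ∂poissonMeasure (.mk (lam * t) h) := by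
  rw [EF_eq_integral_poissonMeasure, pow_one, Real.toNNReal_of_nonneg h]

lemma mul_erlangAccept_le_EF (hk : 0 < k) (hlam : 0 ≤ lam) (ht : 0 < t) :
    lam * t * erlangAccept k lam ≤ EF 1 k lam t := by
  have hM : Tendsto (fun n : ℕ => (⌊t * n⌋₊ : ℝ) / n) atTop (𝓝 t) :=
    (tendsto_nat_floor_mul_div_atTop ht.le).comp tendsto_natCast_atTop_atTop
  refine le_of_tendsto (tendsto_mul_acceptProb hlam ht hM) ?_
  filter_upwards [eventually_gt_atTop 0,
    (tendsto_atTop_of_tendsto_natCast_div ht hM).eventually_gt_atTop 0] with n hn hMn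
  rw [EF_one_eq_integral k (by positivity)]
  refine mul_acceptProb_le_integral_EH hk hn hMn ?_ (.mk (lam * t) _)
  rw [one_div_mul_eq_div, div_le_iff₀' ht]
  exact Nat.floor_le (by positivity)

lemma EF_le_add_mul_erlangAccept (hlam : 0 ≤ lam) (ht : 0 < t) :
    EF 1 k lam t ≤ k + lam * t * erlangAccept k lam := by
  let M (n : ℕ) : ℕ := ⌈t * n⌉₊ + ⌈t⌉₊
  have hM : Tendsto (fun n => (M n : ℝ) / n) atTop (𝓝 t) := by
    simpa only [M, Nat.cast_add, add_div, add_zero, Function.comp_def] using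
      ((tendsto_nat_ceil_mul_div_atTop ht.le).comp tendsto_natCast_atTop_atTop).add
        (tendsto_const_div_atTop_nhds_zero_nat (⌈t⌉₊ : ℝ))
  have hMatTop := tendsto_atTop_of_tendsto_natCast_div ht hM
  have hmean : Tendsto (fun n => lam * t + k - M n * occupationProb (lam * t) (M n)) atTop
      (𝓝 k) := by
    simpa using ((tendsto_mul_occupationProb (lam * t)).comp hMatTop).const_sub (lam * t + k)
  refine ge_of_tendsto (hmean.add (tendsto_mul_acceptProb hlam ht hM)) ?_
  filter_upwards [eventually_gt_atTop 0, hMatTop.eventually_gt_atTop 0] with n hn hMn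
  rw [EF_one_eq_integral k (by positivity)]
  refine integral_EH_le hn hMn ?_ (.mk (lam * t) _)
  rw [one_div_mul_eq_div, le_div_iff₀' ht, mul_add_one, Nat.cast_add]
  exact add_le_add (Nat.le_ceil _) (Nat.le_ceil _)

end ErlangLimit

/-- exact value in dimension one:
`a_{k,λ} = (∑_{m=0}^{k−1} λ^m/m!) / (∑_{l=0}^{k} λ^l/l!) = 1 − Erl(λ,k)`. -/
theorem aConst_dim_one (k : ℕ) (hk : 1 ≤ k) (lam : ℝ) (hlam : 0 < lam) :
    aConst 1 k lam =
      (∑ m ∈ Finset.range k, lam ^ m / (Nat.factorial m : ℝ)) /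
        (∑ l ∈ Finset.range (k + 1), lam ^ l / (Nat.factorial l : ℝ)) := by
  change aConst 1 k lam = erlangAccept k lam
  have hlower : ∀ x ∈ {x : ℝ | ∃ t : ℝ, 0 < t ∧ x = Fbar 1 k lam t}, erlangAccept k lam ≤ x := by
    rintro _ ⟨t, ht, rfl⟩
    rw [Fbar, pow_one, le_div_iff₀' (by positivity)]
    exact mul_erlangAccept_le_EF hk hlam.le ht
  refine le_antisymm (le_of_forall_pos_le_add fun ε hε => ?_) (le_csInf ⟨_, 1, one_pos, rfl⟩ hlower)
  have ht : 0 < k / (lam * ε) := div_pos (Nat.cast_pos.2 hk) (mul_pos hlam hε)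
  calc aConst 1 k lam ≤ Fbar 1 k lam (k / (lam * ε)) :=
        csInf_le ⟨_, hlower⟩ ⟨_, ht, rfl⟩
    _ ≤ erlangAccept k lam + ε := by
        rw [Fbar, pow_one, div_le_iff₀ (mul_pos hlam ht)]
        refine (EF_le_add_mul_erlangAccept hlam.le ht).trans_eq ?_
        field_simp
        ring
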